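/- Let (X,p) be a legal allocation in the divisible multi-slot setting with m = Σ_{i∈I} κ_i. If there exists a bidder u ∈ B with ṽ_u < v_u, then (X,p) contains a trading swap, i.e., there exist a legal allocation (X',p') and bidders u, w ∈ I satisfying conditions (1)–(5) of a trading swap. -/

import Mathlib

/-!
Divisible multi-slot sponsored-search setting.  STATEMENT 1: if some
bidder `u` with positive remaining budget has `ṽ_u < v_u`, then the
legal allocation `(X, p)` contains a trading swap.
-/

open Finset

/-- Legality of a divisible allocation `(X, p)`. -/
def LegalAlloc (n m : ℕ) (κ : Fin n → ℕ) (b : Fin n → ℝ)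
    (X : Fin n → ℕ → ℝ) (p : Fin n → ℝ) : Prop :=
  (∀ i j, j < m → 0 ≤ X i j) ∧
  (∀ i, ∑ j ∈ Finset.range m, X i j ≤ (κ i : ℝ)) ∧
  (∀ j, j < m → ∑ i, X i j = 1) ∧
  (∀ i, p i ≤ b i)

/-- `l(i)`: the (index of the) lowest-quality slot assigned to bidder `i`. -/
noncomputable def lSlot (m : ℕ) {n : ℕ} (X : Fin n → ℕ → ℝ) (i : Fin n) : ℕ :=
  sInf {j | j < m ∧ 0 < X i j}

/-- `h'(i)`: the (index of the) highest-quality slot assigned to bidder `i`. -/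
noncomputable def hSlot' (m : ℕ) {n : ℕ} (X : Fin n → ℕ → ℝ) (i : Fin n) : ℕ :=
  sSup {j | j < m ∧ 0 < X i j}

/-- `h(i) = min { j : α_j = α_{h'(i)} }`. -/
noncomputable def hSlot (m : ℕ) (α : ℕ → ℝ) {n : ℕ}
    (X : Fin n → ℕ → ℝ) (i : Fin n) : ℕ :=
  sInf {j | j < m ∧ α j = α (hSlot' m X i)}

/-- `a ∈ Ñ_i`: `a ≠ i` and `a` is reachable from `i` by the relation
`y ∈ N_x ↔ h(y) > l(x)` (the union of the iterated neighborhood sets). -/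
noncomputable def inTildeN (m : ℕ) (α : ℕ → ℝ) {n : ℕ}
    (X : Fin n → ℕ → ℝ) (i a : Fin n) : Prop :=
  a ≠ i ∧ Relation.TransGen (fun x y : Fin n => lSlot m X x < hSlot m α X y) i a

/-- `(X, p)` contains a trading swap: there are a legal allocation
`(X', p')` and bidders `u, w` satisfying conditions (1)–(5). -/
def ContainsTradingSwap (n m : ℕ) (κ : Fin n → ℕ) (b : Fin n → ℝ)
    (α : ℕ → ℝ) (v : Fin n → ℝ)
    (X : Fin n → ℕ → ℝ) (p : Fin n → ℝ) : Prop :=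
  ∃ (X' : Fin n → ℕ → ℝ) (p' : Fin n → ℝ) (u w : Fin n),
    LegalAlloc n m κ b X' p' ∧
    -- (1) w ∈ Ñ_u
    inTildeN m α X u w ∧
    -- (2) all other bidders keep their weighted capacity and payment
    (∀ i : Fin n, i ≠ u → i ≠ w →
      (∑ j ∈ Finset.range m, α j * X' i j) = (∑ j ∈ Finset.range m, α j * X i j) ∧
      p' i = p i) ∧
    -- (3) δ := Σ_j α_j (x'_{u,j} − x_{u,j}) = Σ_j α_j (x_{w,j} − x'_{w,j}) > 0
    0 < (∑ j ∈ Finset.range m, α j * (X' u j - X u j)) ∧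
    (∑ j ∈ Finset.range m, α j * (X' u j - X u j)) =
      (∑ j ∈ Finset.range m, α j * (X w j - X' w j)) ∧
    -- (4) v_u δ > p'_u − p_u = p_w − p'_w = v_w δ
    p' u - p u = p w - p' w ∧
    p w - p' w = v w * (∑ j ∈ Finset.range m, α j * (X' u j - X u j)) ∧
    v u * (∑ j ∈ Finset.range m, α j * (X' u j - X u j)) > p' u - p u ∧
    -- (5) p'_u ≤ b_u
    p' u ≤ b u

open Finset

/-- Every bidder has a slot with a positive share. -/
lemma aux_support {n m : ℕ} (κ : Fin n → ℕ) (hκ : ∀ i, 1 ≤ κ i)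
    (hm : m = ∑ i, κ i) (b : Fin n → ℝ) (X : Fin n → ℕ → ℝ) (p : Fin n → ℝ)
    (hlegal : LegalAlloc n m κ b X p) (i : Fin n) :
    {j | j < m ∧ 0 < X i j}.Nonempty := by
  obtain ⟨h0, h1, h2, h3⟩ := hlegal
  have htot : ∑ i, ∑ j ∈ Finset.range m, X i j = ∑ i, (κ i : ℝ) := by
    rw [Finset.sum_comm, Finset.sum_congr rfl (fun j hj => h2 j (Finset.mem_range.1 hj))]
    simp only [Finset.sum_const, Finset.card_range, nsmul_eq_mul, mul_one]
    rw [← Nat.cast_sum, ← hm]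
  have hrow := (Finset.sum_eq_sum_iff_of_le (fun i _ => h1 i)).1 htot i (Finset.mem_univ i)
  have hpos : 0 < ∑ j ∈ Finset.range m, X i j := by
    rw [hrow]; exact_mod_cast hκ i
  by_contra hne
  have : ∑ j ∈ Finset.range m, X i j ≤ 0 := by
    apply Finset.sum_nonpos
    intro j hj
    by_contra hc
    exact hne ⟨j, Finset.mem_range.1 hj, not_le.1 hc⟩
  linarith

/-- Feasible directions transferring one unit of weighted capacity from `y` to `x`. -/
def FeasDir (n m : ℕ) (α : ℕ → ℝ) (X : Fin n → ℕ → ℝ) (x y : Fin n)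
    (D : Fin n → ℕ → ℝ) : Prop :=
  (∀ i j, j < m → X i j = 0 → 0 ≤ D i j) ∧
  (∀ i, ∑ j ∈ Finset.range m, D i j = 0) ∧
  (∀ j, ∑ i, D i j = 0) ∧
  (∀ i, ∑ j ∈ Finset.range m, α j * D i j =
    (if i = x then 1 else 0) - (if i = y then 1 else 0))

lemma feasDir_trans {n m : ℕ} {α : ℕ → ℝ} {X : Fin n → ℕ → ℝ} {x y z : Fin n}
    {D E : Fin n → ℕ → ℝ} (hD : FeasDir n m α X x y D) (hE : FeasDir n m α X y z E) :
    FeasDir n m α X x z (fun i j => D i j + E i j) := by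
  obtain ⟨d1, d2, d3, d4⟩ := hD
  obtain ⟨e1, e2, e3, e4⟩ := hE
  refine ⟨fun i j hj h => add_nonneg (d1 i j hj h) (e1 i j hj h), fun i => ?_, fun j => ?_,
    fun i => ?_⟩
  · rw [Finset.sum_add_distrib, d2, e2, add_zero]
  · rw [Finset.sum_add_distrib, d3, e3, add_zero]
  · simp only [mul_add]
    rw [Finset.sum_add_distrib, d4, e4]; ring

lemma feasDir_edge {n m : ℕ} {α : ℕ → ℝ} {X : Fin n → ℕ → ℝ} (x y : Fin n) (l h : ℕ)
    (hl : l < m) (hh : h < m) (hxl : 0 < X x l) (hyh : 0 < X y h) (hα : α l < α h) :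
    ∃ D, FeasDir n m α X x y D := by
  have hd : 0 < α h - α l := sub_pos.2 hα
  refine ⟨fun i j => ((if i = x then 1 else 0) - (if i = y then 1 else 0)) *
    (((if j = h then 1 else 0) - (if j = l then 1 else 0)) * (α h - α l)⁻¹), ?_, ?_, ?_, ?_⟩
  · intro i j hj h0
    have hi := (inv_pos.2 hd).le
    beta_reduce
    rw [← mul_assoc]
    apply mul_nonneg _ hi
    have c1 : ¬ (i = x ∧ j = l) := by rintro ⟨rfl, rfl⟩; linarith
    have c2 : ¬ (i = y ∧ j = h) := by rintro ⟨rfl, rfl⟩; linarith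
    have c3 : l ≠ h := by rintro rfl; linarith
    split_ifs <;> simp_all
  · intro i
    rw [← Finset.mul_sum, ← Finset.sum_mul, Finset.sum_sub_distrib]
    simp [hl, hh]
  · intro j
    rw [← Finset.sum_mul, Finset.sum_sub_distrib]
    simp
  · intro i
    have e : ∀ j, α j * (((if i = x then (1:ℝ) else 0) - (if i = y then 1 else 0)) *
      (((if j = h then 1 else 0) - (if j = l then 1 else 0)) * (α h - α l)⁻¹)) =
      ((if j = h then α j else 0) - (if j = l then α j else 0)) *
      ((α h - α l)⁻¹ * ((if i = x then (1:ℝ) else 0) - (if i = y then 1 else 0))) := by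
      intro j
      split_ifs <;> ring
    rw [Finset.sum_congr rfl (fun j _ => e j), ← Finset.sum_mul, Finset.sum_sub_distrib]
    simp only [Finset.sum_ite_eq', Finset.mem_range, hl, hh, if_true]
    rw [← mul_assoc, mul_inv_cancel₀ hd.ne', one_mul]

lemma feasDir_rel {n m : ℕ} {α : ℕ → ℝ} (hαmono : Monotone α) {X : Fin n → ℕ → ℝ}
    (hS : ∀ i, {j | j < m ∧ 0 < X i j}.Nonempty) (x y : Fin n)
    (hxy : lSlot m X x < hSlot m α X y) : ∃ D, FeasDir n m α X x y D := by
  have hl := Nat.sInf_mem (hS x)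
  have hh := Nat.sSup_mem (hS y) ⟨m, fun j hj => hj.1.le⟩
  have hmem := Nat.sInf_mem (s := {j | j < m ∧ α j = α (hSlot' m X y)}) ⟨_, hh.1, rfl⟩
  refine feasDir_edge x y (lSlot m X x) (hSlot' m X y) hl.1 hh.1 hl.2 hh.2 ?_
  have hle : α (lSlot m X x) ≤ α (hSlot' m X y) := by
    rw [← hmem.2]; exact hαmono hxy.le
  refine lt_of_le_of_ne hle fun heq => ?_
  have := Nat.sInf_le (s := {j | j < m ∧ α j = α (hSlot' m X y)}) ⟨hl.1, heq⟩
  exact absurd hxy (not_lt.2 this)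

/-- if there exists a bidder `u ∈ B` with `ṽ_u < v_u`,
then `(X, p)` contains a trading swap. -/
theorem stmt1 {n m : ℕ} (κ : Fin n → ℕ) (hκ : ∀ i, 1 ≤ κ i)
    (hm : m = ∑ i, κ i)
    (α : ℕ → ℝ) (hα0 : ∀ j, 0 ≤ α j) (hαmono : Monotone α)
    (v b : Fin n → ℝ) (hv : ∀ i, 0 ≤ v i)
    (X : Fin n → ℕ → ℝ) (p : Fin n → ℝ)
    (hlegal : LegalAlloc n m κ b X p)
    (hu : ∃ u : Fin n, p u < b u ∧ ∃ a : Fin n, inTildeN m α X u a ∧ v a < v u) :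
    ContainsTradingSwap n m κ b α v X p := by
  obtain ⟨u, hpu, w, ⟨hwu, hreach⟩, hvw⟩ := hu
  have hS := aux_support κ hκ hm b X p hlegal
  obtain ⟨h0, h1, h2, h3⟩ := hlegal
  have hDex : ∃ D, FeasDir n m α X u w D := by
    clear hwu hvw
    induction hreach with
    | single h => exact feasDir_rel hαmono hS _ _ h
    | tail _ h ih =>
      obtain ⟨D, hD⟩ := ih
      obtain ⟨E, hE⟩ := feasDir_rel hαmono hS _ _ h
      exact ⟨_, feasDir_trans hD hE⟩
  obtain ⟨D, d1, d2, d3, d4⟩ := hDex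
  have hev : ∀ᶠ t : ℝ in nhdsWithin 0 (Set.Ioi 0),
      (∀ i, ∀ j ∈ Finset.range m, 0 ≤ X i j + t * D i j) ∧ t * v w < b u - p u ∧ 0 < t := by
    refine Filter.Eventually.and ?_ (Filter.Eventually.and ?_ self_mem_nhdsWithin)
    · rw [Filter.eventually_all]
      intro i
      rw [Filter.eventually_all_finset]
      intro j hj
      have hj' := Finset.mem_range.1 hj
      rcases (h0 i j hj').eq_or_lt with hz | hp
      · filter_upwards [self_mem_nhdsWithin] with t ht
        rw [← hz, zero_add]
        exact mul_nonneg (le_of_lt ht) (d1 i j hj' hz.symm)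
      · have hc : ContinuousAt (fun t : ℝ => X i j + t * D i j) 0 := by fun_prop
        have := hc.eventually (lt_mem_nhds (a := 0) (by simpa using hp))
        exact (this.filter_mono nhdsWithin_le_nhds).mono fun t ht => le_of_lt ht
    · have hc : ContinuousAt (fun t : ℝ => t * v w) 0 := by fun_prop
      have := hc.eventually_lt (continuousAt_const (y := b u - p u)) (by simpa using hpu)
      exact this.filter_mono nhdsWithin_le_nhds
  obtain ⟨t, ht1, ht2, ht⟩ := hev.exists
  have htv : 0 ≤ t * v w := mul_nonneg ht.le (hv w)
  have hcap : ∀ i, ∑ j ∈ Finset.range m, α j * (X i j + t * D i j - X i j) =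
      t * ((if i = u then 1 else 0) - (if i = w then 1 else 0)) := by
    intro i
    rw [← d4 i, Finset.mul_sum]
    exact Finset.sum_congr rfl fun j _ => by ring
  have hcu : ∑ j ∈ Finset.range m, α j * (X u j + t * D u j - X u j) = t := by
    rw [hcap]; simp [hwu.symm]
  have hcw : ∑ j ∈ Finset.range m, α j * (X w j - (X w j + t * D w j)) = t := by
    have := hcap w
    simp only [hwu, if_true, if_false] at this
    have e : ∑ j ∈ Finset.range m, α j * (X w j - (X w j + t * D w j)) =
        - ∑ j ∈ Finset.range m, α j * (X w j + t * D w j - X w j) := by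
      rw [← Finset.sum_neg_distrib]
      exact Finset.sum_congr rfl fun j _ => by ring
    rw [e, this]; ring
  refine ⟨fun i j => X i j + t * D i j,
    fun i => p i + ((if i = u then t * v w else 0) - (if i = w then t * v w else 0)), u, w,
    ⟨?_, ?_, ?_, ?_⟩, ⟨hwu, hreach⟩, ?_, ?_, ?_, ?_, ?_, ?_, ?_⟩
  · exact fun i j hj => ht1 i j (Finset.mem_range.2 hj)
  · intro i
    rw [Finset.sum_add_distrib, ← Finset.mul_sum, d2, mul_zero, add_zero]
    exact h1 i
  · intro j hj
    rw [Finset.sum_add_distrib, ← Finset.mul_sum, d3, mul_zero, add_zero]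
    exact h2 j hj
  · intro i
    have := h3 i
    by_cases hi : i = u
    · subst hi
      simp only [hwu.symm, if_true, if_false]; linarith
    · simp only [hi, if_false]
      split_ifs <;> linarith
  · intro i hiu hiw
    constructor
    · have := hcap i
      simp only [hiu, hiw, if_false, mul_sub, Finset.sum_sub_distrib] at this
      simp only
      linarith
    · simp [hiu, hiw]
  · simp only [hcu]; exact ht
  · simp only [hcu, hcw]
  · simp [hwu, hwu.symm]
  · simp only [hcu]; simp [hwu]; ring
  · simp only [hcu]
    simp only [hwu.symm, if_true, if_false]
    nlinarith
  · simp only [hwu.symm, if_true, if_false]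
    linarith
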